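/- Assume each coefficient F_j lies in a linear subspace 𝒮_j = span(P^{(1,j)}, …, P^{(d_j,j)}) ⊆ ℂ^{n×n}, where the basis matrices P^{(i,j)} are orthonormal with respect to the Frobenius inner product. Then the structured backward error of the approximate eigenpairs (V, Λ) satisfies η_𝒮 = ‖[((G ⊙^T V^T) ⊗ I_n) P]† r‖₂, where r = vec(R); that is, the minimum in the definition of η_𝒮 is attained and equals this value. -/

import Mathlib

open Matrix Kronecker BigOperators

noncomputable section

/-- Frobenius norm of a complex matrix. -/
def fnorm {ι κ : Type*} [Fintype ι] [Fintype κ] (A : Matrix ι κ ℂ) : ℝ :=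
  Real.sqrt (∑ i, ∑ j, ‖A i j‖ ^ 2)

/-- Euclidean norm of a complex vector. -/
def vnorm {ι : Type*} [Fintype ι] (v : ι → ℂ) : ℝ :=
  Real.sqrt (∑ i, ‖v i‖ ^ 2)

/-- The four Moore–Penrose conditions. -/
def IsMoorePenrose {ι κ : Type*} [Fintype ι] [Fintype κ]
    (A : Matrix ι κ ℂ) (B : Matrix κ ι ℂ) : Prop :=
  A * B * A = A ∧ B * A * B = B ∧ (A * B)ᴴ = A * B ∧ (B * A)ᴴ = B * A

open scoped Classical in
/-- The Moore–Penrose pseudoinverse (defined by choice; it always exists and is unique). -/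
noncomputable def pinv {ι κ : Type*} [Fintype ι] [Fintype κ] (A : Matrix ι κ ℂ) :
    Matrix κ ι ℂ :=
  if h : ∃ B, IsMoorePenrose A B then h.choose else 0

/-- `s` is a singular value of `A`: `s ≥ 0` and `s²` is an eigenvalue of `Aᴴ A`. -/
def IsSingularValue {ι κ : Type*} [Fintype ι] [Fintype κ] (A : Matrix ι κ ℂ) (s : ℝ) : Prop :=
  0 ≤ s ∧ ∃ w : κ → ℂ, w ≠ 0 ∧ (Aᴴ * A).mulVec w = ((s : ℂ) ^ 2) • w

/-- The smallest nonzero singular value of `A`, i.e. `σ_p̂(A)` where `p̂ = rank A`. -/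
noncomputable def sigmaMinPos {ι κ : Type*} [Fintype ι] [Fintype κ] (A : Matrix ι κ ℂ) : ℝ :=
  sInf {s : ℝ | IsSingularValue A s ∧ 0 < s}

/-- The smallest singular value of a square matrix `A`, the minimum of `‖A v‖₂` over
unit vectors `v`. -/
noncomputable def sigmaMinSq {n : ℕ} (A : Matrix (Fin n) (Fin n) ℂ) : ℝ :=
  sInf {x : ℝ | ∃ w : Fin n → ℂ, vnorm w = 1 ∧ x = vnorm (A.mulVec w)}

/-- The transposed Khatri–Rao product `G ⊙^T W` of `G : p × k` and `W : p × n`: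
the `p × kn` matrix whose `i`-th row is `[G i 1 • (row i of W), …, G i k • (row i of W)]`. -/
def krt {p k n : ℕ} (G : Matrix (Fin p) (Fin k) ℂ) (W : Matrix (Fin p) (Fin n) ℂ) :
    Matrix (Fin p) (Fin k × Fin n) ℂ :=
  Matrix.of fun i jl => G i jl.1 * W i jl.2

/-!
In the coordinates `x` of a structured perturbation with respect to the bases `P^(i,j)`, the
constraint `∑ⱼ (Fⱼ + δFⱼ) V fⱼ(Λ) = 0` is a linear system `A x = -r`, where `A` is the matrix
`((G ⊙ᵀ Vᵀ) ⊗ I) P`, and the Frobenius norm of the perturbation is the Euclidean norm of `x`,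
because the columns of `P` are orthonormal. The system is consistent, since `δFⱼ = -Fⱼ` solves it,
so its solution of least norm is `-A† r`: for every solution `x` one has `-A† r = A† A x`, and
`A† A` is an orthogonal projection.
-/

section EuclideanNorm

variable {ι κ : Type*} [Fintype ι] [Fintype κ]

theorem vnorm_eq_norm_toLp (v : ι → ℂ) : vnorm v = ‖WithLp.toLp 2 v‖ :=
  (EuclideanSpace.norm_eq _).symm

theorem vnorm_neg (v : ι → ℂ) : vnorm (-v) = vnorm v := by
  simp only [vnorm, Pi.neg_apply, norm_neg]

theorem vnorm_vec (A : Matrix ι κ ℂ) : vnorm (vec A) = fnorm A := by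
  simp only [vnorm, fnorm, vec, Fintype.sum_prod_type_right]

theorem ofReal_vnorm_sq (v : ι → ℂ) : ((vnorm v ^ 2 : ℝ) : ℂ) = star v ⬝ᵥ v := by
  rw [vnorm_eq_norm_toLp, Complex.ofReal_pow, dotProduct_comm]
  exact (inner_self_eq_norm_sq_to_K (𝕜 := ℂ) (WithLp.toLp 2 v)).symm

theorem vnorm_mulVec_of_conjTranspose_mul_self [DecidableEq κ] {U : Matrix ι κ ℂ}
    (hU : Uᴴ * U = 1) (x : κ → ℂ) : vnorm (U *ᵥ x) = vnorm x := by
  have hsq : vnorm (U *ᵥ x) ^ 2 = vnorm x ^ 2 := by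
    apply Complex.ofReal_injective
    rw [ofReal_vnorm_sq, ofReal_vnorm_sq, star_mulVec, ← dotProduct_mulVec, mulVec_mulVec, hU,
      one_mulVec]
  exact (sq_eq_sq₀ (Real.sqrt_nonneg _) (Real.sqrt_nonneg _)).1 hsq

open scoped Matrix.Norms.L2Operator in
theorem vnorm_mulVec_le_of_isStarProjection {Q : Matrix κ κ ℂ} (hQ : IsStarProjection Q)
    (x : κ → ℂ) : vnorm (Q *ᵥ x) ≤ vnorm x := by
  classical
  rw [vnorm_eq_norm_toLp, vnorm_eq_norm_toLp]
  calc ‖WithLp.toLp 2 (Q *ᵥ x)‖ ≤ ‖Q‖ * ‖WithLp.toLp 2 x‖ := l2_opNorm_mulVec Q _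
    _ ≤ ‖WithLp.toLp 2 x‖ := mul_le_of_le_one_left (norm_nonneg _) (IsStarProjection.norm_le Q hQ)

end EuclideanNorm

section LeastSquaresInverse

variable {ι κ 𝕜 : Type*} [Fintype ι] [Fintype κ]

theorem range_mulVecLin_conjTranspose_mul_self [Field 𝕜] [PartialOrder 𝕜] [StarRing 𝕜]
    [StarOrderedRing 𝕜] (A : Matrix ι κ 𝕜) :
    LinearMap.range (Aᴴ * A).mulVecLin = LinearMap.range Aᴴ.mulVecLin := by
  refine Submodule.eq_of_le_of_finrank_eq ?_ ?_
  · rw [mulVecLin_mul]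
    exact LinearMap.range_comp_le_range _ _
  · exact (rank_conjTranspose_mul_self A).trans (rank_conjTranspose A).symm

theorem exists_conjTranspose_mul_self_mul_eq [Field 𝕜] [PartialOrder 𝕜] [StarRing 𝕜]
    [StarOrderedRing 𝕜] (A : Matrix ι κ 𝕜) : ∃ X : Matrix κ ι 𝕜, Aᴴ * A * X = Aᴴ := by
  classical
  have hcol (i : ι) : ∃ x, (Aᴴ * A) *ᵥ x = Aᴴ.col i := by
    have hmem : Aᴴ.col i ∈ LinearMap.range (Aᴴ * A).mulVecLin := by
      rw [range_mulVecLin_conjTranspose_mul_self]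
      exact ⟨Pi.single i 1, mulVec_single_one _ _⟩
    exact hmem
  choose x hx using hcol
  exact ⟨(of x)ᵀ, Matrix.ext fun c i => congrFun (hx i) c⟩

variable [Semiring 𝕜] [StarRing 𝕜] {A : Matrix ι κ 𝕜} {X : Matrix κ ι 𝕜}

theorem isHermitian_mul_of_conjTranspose_mul_self_mul (hX : Aᴴ * A * X = Aᴴ) :
    (A * X).IsHermitian := by
  have hgram : (A * X)ᴴ * (A * X) = (A * X)ᴴ := by
    rw [conjTranspose_mul, Matrix.mul_assoc, ← Matrix.mul_assoc Aᴴ, hX]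
  rw [← isHermitian_conjTranspose_iff, ← hgram]
  exact isHermitian_conjTranspose_mul_self (A * X)

theorem mul_mul_self_of_conjTranspose_mul_self_mul (hX : Aᴴ * A * X = Aᴴ) : A * X * A = A := by
  rw [← (isHermitian_mul_of_conjTranspose_mul_self_mul hX).eq]
  simpa [conjTranspose_mul, Matrix.mul_assoc] using congrArg conjTranspose hX

end LeastSquaresInverse

section MoorePenrose

variable {ι κ : Type*} [Fintype ι] [Fintype κ] {A : Matrix ι κ ℂ}

-- The Urquhart formula `A† = A^(1,4) A A^(1,3)`.
theorem isMoorePenrose_mul_mul {X Y : Matrix κ ι ℂ} (hX : A * X * A = A)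
    (hAX : (A * X).IsHermitian) (hY : A * Y * A = A) (hYA : (Y * A).IsHermitian) :
    IsMoorePenrose A (Y * A * X) := by
  have hleft : A * (Y * A * X) = A * X := by simp only [← Matrix.mul_assoc, hY]
  have hright : Y * A * X * A = Y * A := by
    rw [Matrix.mul_assoc, Matrix.mul_assoc, ← Matrix.mul_assoc A, hX]
  refine ⟨by rw [hleft, hX], ?_, by rw [hleft, hAX.eq], by rw [hright, hYA.eq]⟩
  rw [hright, Matrix.mul_assoc, hleft, Matrix.mul_assoc]

open scoped ComplexOrder in
theorem exists_isMoorePenrose (A : Matrix ι κ ℂ) : ∃ B, IsMoorePenrose A B := by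
  obtain ⟨X, hX⟩ := exists_conjTranspose_mul_self_mul_eq A
  obtain ⟨Z, hZ⟩ := exists_conjTranspose_mul_self_mul_eq Aᴴ
  have hAZ := isHermitian_mul_of_conjTranspose_mul_self_mul hZ
  have hZA : Zᴴ * A = Aᴴ * Z := by simpa [conjTranspose_mul] using hAZ.eq
  have hAZA : A * Zᴴ * A = A := by
    simpa [conjTranspose_mul, Matrix.mul_assoc] using
      congrArg conjTranspose (mul_mul_self_of_conjTranspose_mul_self_mul hZ)
  exact ⟨_, isMoorePenrose_mul_mul (mul_mul_self_of_conjTranspose_mul_self_mul hX)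
    (isHermitian_mul_of_conjTranspose_mul_self_mul hX) hAZA (hZA ▸ hAZ)⟩

theorem isMoorePenrose_pinv (A : Matrix ι κ ℂ) : IsMoorePenrose A (pinv A) := by
  rw [pinv, dif_pos (exists_isMoorePenrose A)]
  exact (exists_isMoorePenrose A).choose_spec

variable {B : Matrix κ ι ℂ}

theorem IsMoorePenrose.isStarProjection_mul (h : IsMoorePenrose A B) :
    IsStarProjection (B * A) := by
  obtain ⟨-, hBAB, -, hBA⟩ := h
  exact ⟨by rw [IsIdempotentElem, ← Matrix.mul_assoc, hBAB], hBA⟩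

theorem IsMoorePenrose.isLeast_vnorm (h : IsMoorePenrose A B) {b : ι → ℂ}
    (hb : ∃ x, A *ᵥ x = b) : IsLeast (vnorm '' {x | A *ᵥ x = b}) (vnorm (B *ᵥ b)) := by
  constructor
  · obtain ⟨x, rfl⟩ := hb
    refine ⟨_, ?_, rfl⟩
    rw [Set.mem_ofPred_eq, mulVec_mulVec, mulVec_mulVec, h.1]
  · rintro _ ⟨x, rfl, rfl⟩
    rw [mulVec_mulVec]
    exact vnorm_mulVec_le_of_isStarProjection h.isStarProjection_mul x

end MoorePenrose

section StructuredCoefficients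

variable {κ m n R : Type*} {δ : κ → Type*}

/-- The block row `[E₁, …, E_k]`; the column `(j, l)` is column `l` of the block `E j`. -/
def blockRow (E : κ → Matrix m n R) : Matrix m (κ × n) R :=
  of fun i jl => E jl.1 i jl.2

/-- The coefficients `Eⱼ = ∑ₐ x_(j,a) P^(a,j)` with coordinates `x` in the families `P j`. -/
def ofCoords [∀ j, Fintype (δ j)] [Semiring R] (P : (j : κ) → δ j → Matrix m n R)
    (x : (Σ j, δ j) → R) (j : κ) : Matrix m n R :=
  ∑ a, x ⟨j, a⟩ • P j a

/-- The matrix `P = blockdiag(P^(1), …, P^(k))`, whose diagonal block `P^(j)` has the columns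
`vec (P j a)`. The row index `((j, l), i)` is that of `vec (blockRow E)`. -/
def vecBlockDiagonal [DecidableEq κ] [Zero R] (P : (j : κ) → δ j → Matrix m n R) :
    Matrix ((κ × n) × m) (Σ j, δ j) R :=
  of fun jli c => if jli.1.1 = c.1 then P c.1 c.2 jli.2 jli.1.2 else 0

theorem forall_mem_span_range_iff_exists_ofCoords [∀ j, Fintype (δ j)] [Semiring R]
    {P : (j : κ) → δ j → Matrix m n R} {E : κ → Matrix m n R} :
    (∀ j, E j ∈ Submodule.span R (Set.range (P j))) ↔ ∃ x, ofCoords P x = E := by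
  simp only [Submodule.mem_span_range_iff_exists_fun, funext_iff]
  constructor
  · intro h
    choose c hc using h
    exact ⟨fun s => c s.1 s.2, hc⟩
  · rintro ⟨x, hx⟩ j
    exact ⟨fun a => x ⟨j, a⟩, hx j⟩

theorem vecBlockDiagonal_mulVec [Fintype κ] [DecidableEq κ] [∀ j, Fintype (δ j)] [CommSemiring R]
    (P : (j : κ) → δ j → Matrix m n R) (x : (Σ j, δ j) → R) :
    vecBlockDiagonal P *ᵥ x = vec (blockRow (ofCoords P x)) := by
  ext ⟨⟨j, l⟩, i⟩
  simp [mulVec, dotProduct, vecBlockDiagonal, blockRow, ofCoords, Fintype.sum_sigma,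
    Matrix.sum_apply, mul_comm]

theorem conjTranspose_vecBlockDiagonal_mul_self [Fintype κ] [DecidableEq κ] [Fintype m]
    [Fintype n] [∀ j, DecidableEq (δ j)] [Semiring R] [StarRing R]
    {P : (j : κ) → δ j → Matrix m n R}
    (hP : ∀ j a b, ((P j a)ᴴ * P j b).trace = if a = b then 1 else 0) :
    (vecBlockDiagonal P)ᴴ * vecBlockDiagonal P = 1 := by
  ext ⟨j, a⟩ ⟨j', b⟩
  obtain rfl | hj := eq_or_ne j j'
  · calc ((vecBlockDiagonal P)ᴴ * vecBlockDiagonal P) ⟨j, a⟩ ⟨j, b⟩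
        = ((P j a)ᴴ * P j b).trace := by
          rw [mul_apply, Fintype.sum_prod_type, Fintype.sum_prod_type, Fintype.sum_eq_single j]
          · simp [vecBlockDiagonal, trace, mul_apply]
          · intro j' hj'
            simp [vecBlockDiagonal, hj']
      _ = (1 : Matrix (Σ j, δ j) (Σ j, δ j) R) ⟨j, a⟩ ⟨j, b⟩ := by simp [hP, one_apply]
  · rw [mul_apply, one_apply_ne (by simp [hj])]
    refine Finset.sum_eq_zero fun jli _ => ?_
    by_cases h : jli.1.1 = j
    · simp [vecBlockDiagonal, h, hj]
    · simp [vecBlockDiagonal, h]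

theorem fnorm_blockRow_ofCoords [Fintype κ] [∀ j, Fintype (δ j)] [∀ j, DecidableEq (δ j)]
    [Fintype m] [Fintype n] {P : (j : κ) → δ j → Matrix m n ℂ}
    (hP : ∀ j a b, ((P j a)ᴴ * P j b).trace = if a = b then 1 else 0) (x : (Σ j, δ j) → ℂ) :
    fnorm (blockRow (ofCoords P x)) = vnorm x := by
  classical
  rw [← vnorm_vec, ← vecBlockDiagonal_mulVec,
    vnorm_mulVec_of_conjTranspose_mul_self (conjTranspose_vecBlockDiagonal_mul_self hP)]

end StructuredCoefficients

section KhatriRao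

variable {m : Type*} {n k p : ℕ}

theorem blockRow_mul_transpose_krt (E : Fin k → Matrix m (Fin n) ℂ) (V : Matrix (Fin n) (Fin p) ℂ)
    (G : Matrix (Fin p) (Fin k) ℂ) :
    blockRow E * (krt G Vᵀ)ᵀ = ∑ j, E j * V * diagonal fun i => G i j := by
  ext a i
  rw [mul_apply, Fintype.sum_prod_type, Matrix.sum_apply]
  simp only [mul_diagonal, Matrix.mul_apply (M := E _), Finset.sum_mul, blockRow, krt, of_apply,
    transpose_apply]
  exact Finset.sum_congr rfl fun j _ => Finset.sum_congr rfl fun l _ => by ring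

theorem krt_kronecker_one_mul_vecBlockDiagonal_mulVec [Fintype m] [DecidableEq m]
    {δ : Fin k → Type*} [∀ j, Fintype (δ j)] (P : (j : Fin k) → δ j → Matrix m (Fin n) ℂ)
    (V : Matrix (Fin n) (Fin p) ℂ) (G : Matrix (Fin p) (Fin k) ℂ) (x : (Σ j, δ j) → ℂ) :
    ((krt G Vᵀ ⊗ₖ (1 : Matrix m m ℂ)) * vecBlockDiagonal P) *ᵥ x =
      vec (∑ j, ofCoords P x j * V * diagonal fun i => G i j) := by
  rw [← mulVec_mulVec, vecBlockDiagonal_mulVec, kronecker_mulVec_vec, Matrix.one_mul,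
    blockRow_mul_transpose_krt]

theorem sum_ofCoords_add_mul_eq_zero_iff [Fintype m] [DecidableEq m]
    {δ : Fin k → Type*} [∀ j, Fintype (δ j)] (P : (j : Fin k) → δ j → Matrix m (Fin n) ℂ)
    (V : Matrix (Fin n) (Fin p) ℂ) (G : Matrix (Fin p) (Fin k) ℂ) (y x : (Σ j, δ j) → ℂ) :
    (∑ j, (ofCoords P y j + ofCoords P x j) * V * diagonal fun i => G i j) = 0 ↔
      ((krt G Vᵀ ⊗ₖ (1 : Matrix m m ℂ)) * vecBlockDiagonal P) *ᵥ x =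
        -vec (∑ j, ofCoords P y j * V * diagonal fun i => G i j) := by
  rw [krt_kronecker_one_mul_vecBlockDiagonal_mulVec, ← vec_neg, vec_inj,
    ← add_eq_zero_iff_eq_neg', ← Finset.sum_add_distrib]
  simp only [Matrix.add_mul]

end KhatriRao

/-- Structured backward error for coefficients in linear subspaces `𝒮ⱼ` spanned by
Frobenius-orthonormal bases `P^(i,j)`: the structured backward error `η_𝒮` of the approximate
eigenpairs `(V, Λ)` is attained and equals `‖[((G ⊙ᵀ Vᵀ) ⊗ Iₙ) P]† r‖₂`, where `r = vec R`
and `P` is the block-diagonal matrix of the vectorized bases. -/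
theorem structured_backward_error_eq (n k p : ℕ)
    (F : Fin k → Matrix (Fin n) (Fin n) ℂ)
    (f : Fin k → ℂ → ℂ) (lam : Fin p → ℂ)
    (V : Matrix (Fin n) (Fin p) ℂ)
    (d : Fin k → ℕ)
    (P : (j : Fin k) → Fin (d j) → Matrix (Fin n) (Fin n) ℂ)
    (hP : ∀ j a b, ∑ m, ∑ l, (starRingEnd ℂ) (P j a m l) * P j b m l =
      if a = b then 1 else 0)
    (hF : ∀ j, F j ∈ Submodule.span ℂ (Set.range (P j)))
    (G : Matrix (Fin p) (Fin k) ℂ) (hG : ∀ i j, G i j = f j (lam i))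
    (R : Matrix (Fin n) (Fin p) ℂ)
    (hR : R = ∑ j, F j * V * Matrix.diagonal fun i => f j (lam i))
    (r : Fin p × Fin n → ℂ) (hr : ∀ i m, r (i, m) = R m i)
    (Pm : Matrix ((Fin k × Fin n) × Fin n) ((j : Fin k) × Fin (d j)) ℂ)
    (hPm : ∀ jl m c, Pm (jl, m) c = if jl.1 = c.1 then P c.1 c.2 m jl.2 else 0) :
    IsLeast
      {x : ℝ | ∃ δF : Fin k → Matrix (Fin n) (Fin n) ℂ,
        (∀ j, δF j ∈ Submodule.span ℂ (Set.range (P j))) ∧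
        (∑ j, (F j + δF j) * V * Matrix.diagonal fun i => f j (lam i)) = 0 ∧
        x = fnorm (Matrix.of fun (m : Fin n) (jl : Fin k × Fin n) => δF jl.1 m jl.2)}
      (vnorm ((pinv ((krt G Vᵀ ⊗ₖ (1 : Matrix (Fin n) (Fin n) ℂ)) * Pm)).mulVec r)) := by
  obtain rfl : Pm = vecBlockDiagonal P := Matrix.ext fun i c => hPm i.1 i.2 c
  obtain rfl : r = vec R := funext fun i => hr i.1 i.2
  obtain ⟨y, rfl⟩ := forall_mem_span_range_iff_exists_ofCoords.1 hF
  have hP' (j a b) : ((P j a)ᴴ * P j b).trace = if a = b then 1 else 0 := by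
    rw [← hP j a b, Finset.sum_comm]
    rfl
  simp only [← hG] at hR ⊢
  have hfeas := sum_ofCoords_add_mul_eq_zero_iff P V G y
  rw [← hR] at hfeas
  have hconsistent := (hfeas (-y)).1 (by simp [ofCoords])
  convert (isMoorePenrose_pinv _).isLeast_vnorm ⟨-y, hconsistent⟩ using 1
  · ext t
    constructor
    · rintro ⟨E, hE, hE0, rfl⟩
      obtain ⟨x, rfl⟩ := forall_mem_span_range_iff_exists_ofCoords.1 hE
      exact ⟨x, (hfeas x).1 hE0, (fnorm_blockRow_ofCoords hP' x).symm⟩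
    · rintro ⟨x, hx, rfl⟩
      exact ⟨ofCoords P x, forall_mem_span_range_iff_exists_ofCoords.2 ⟨x, rfl⟩, (hfeas x).2 hx,
        (fnorm_blockRow_ofCoords hP' x).symm⟩
  · rw [mulVec_neg, vnorm_neg]
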